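/- Let n ≥ 1, let P := {x ∈ ℝ^n : x_i > 0 for all i, and x_1 + … + x_n < (n+1)/n}, and define φ : P → ℝ by φ(x) = −1 + x_1 + … + x_n. Then ∫_{P_+} φ dμ = 1/(n+1)!, ∫_{P_−} (−φ) dμ = 1/(n+1)!, hence ∫_P φ dμ = 0 and ∫_P |φ| dμ = 2/(n+1)!; moreover μ(P) = (1/n!)·((n+1)/n)^n. -/

import Mathlib

open MeasureTheory Set

/-!
Write `S n t` for the open simplex `{x | 0 < x i, ∑ x i < t}` in `ℝⁿ`. The set `S (n + 1) t` is
sliced in two ways. Fixing the first coordinate `u`, the slices are `S n (t - u)`, and induction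
on `n` gives `vol (S n t) = tⁿ / n!` for `t > 0`. Fixing the last `n` coordinates `y`, the slices are
the intervals `(0, t - ∑ y i)` over `S n t`, so that
`∫_{S n t} (t - ∑ y i) = vol (S (n + 1) t) = tⁿ⁺¹ / (n + 1)!`.

For `φ = ∑ x i - 1`, the case `t = 1` of the latter formula is the integral of `-φ` over `P_-`
(up to the hyperplane `φ = 0`, where the integrand vanishes), and the case `t = (n + 1) / n`, with
`φ = (t - 1) - (t - ∑ x i)`, gives `∫_P φ = 0`. The other two integrals follow by splitting
`P` into `P_+` and `P_-`.
-/

/-- The open simplex `{x ∈ ℝⁿ : x i > 0, ∑ x i < t}`. -/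
def openSimplex (n : ℕ) (t : ℝ) : Set (Fin n → ℝ) := {x | (∀ i, 0 < x i) ∧ ∑ i, x i < t}

lemma measurableSet_openSimplex (n : ℕ) (t : ℝ) : MeasurableSet (openSimplex n t) := by
  have h : openSimplex n t = (⋂ i, {x | 0 < x i}) ∩ {x | ∑ i, x i < t} := by
    ext x; simp [openSimplex]
  rw [h]
  refine (MeasurableSet.iInter fun i => ?_).inter ?_
  · exact measurableSet_lt measurable_const (measurable_pi_apply i)
  · exact measurableSet_lt (by fun_prop) measurable_const

/-- `openSimplex (n + 1) t` with its first coordinate split off. -/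
def splitSimplex (n : ℕ) (t : ℝ) : Set (ℝ × (Fin n → ℝ)) :=
  {p | 0 < p.1 ∧ p.2 ∈ openSimplex n (t - p.1)}

lemma measurableSet_splitSimplex (n : ℕ) (t : ℝ) : MeasurableSet (splitSimplex n t) := by
  have h : splitSimplex n t =
      {p | 0 < p.1} ∩ ((⋂ i, {p | 0 < p.2 i}) ∩ {p | ∑ i, p.2 i < t - p.1}) := by
    ext x; simp [openSimplex, splitSimplex]
  rw [h]
  refine (measurableSet_lt measurable_const measurable_fst).inter
    ((MeasurableSet.iInter fun i => ?_).inter ?_)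
  · exact measurableSet_lt measurable_const (by fun_prop)
  · exact measurableSet_lt (by fun_prop) (by fun_prop)

lemma volume_openSimplex_succ (n : ℕ) (t : ℝ) :
    volume (openSimplex (n + 1) t) = volume (splitSimplex n t) := by
  have h := (volume_preserving_piFinSuccAbove (fun _ : Fin (n + 1) => ℝ) 0).measure_preimage
    (measurableSet_splitSimplex n t).nullMeasurableSet
  rw [← h]
  congr 1
  ext x
  simp only [openSimplex, splitSimplex, mem_ofPred_eq, mem_preimage, Fin.forall_fin_succ,
    Fin.sum_univ_succ, MeasurableEquiv.piFinSuccAbove_apply, Fin.insertNthEquiv_zero,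
    Fin.consEquiv_symm_apply, Fin.tail, lt_sub_iff_add_lt', and_assoc]

lemma openSimplex_eq_empty (n : ℕ) {t : ℝ} (ht : t ≤ 0) : openSimplex n t = ∅ := by
  ext x
  simp only [openSimplex, mem_ofPred_eq, mem_empty_iff_false, iff_false, not_and, not_lt]
  exact fun h => ht.trans (Finset.sum_nonneg fun i _ => (h i).le)

lemma volume_openSimplex (n : ℕ) : ∀ t : ℝ, 0 < t →
    volume (openSimplex n t) = ENNReal.ofReal (t ^ n / n.factorial) := by
  induction n with
  | zero =>
    intro t ht
    have : openSimplex 0 t = univ := by ext x; simp [openSimplex, ht]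
    rw [this, volume_pi, Measure.pi_of_empty]
    simp
  | succ n ih =>
    intro t ht
    rw [volume_openSimplex_succ, Measure.volume_eq_prod,
      Measure.prod_apply (measurableSet_splitSimplex n t)]
    have h1 : ∀ u : ℝ, volume (Prod.mk u ⁻¹' splitSimplex n t) =
        (Ioo 0 t).indicator (fun u => ENNReal.ofReal ((t - u) ^ n / n.factorial)) u := by
      intro u
      by_cases hu : u ∈ Ioo 0 t
      · rw [indicator_of_mem hu, ← ih _ (sub_pos.2 hu.2)]
        congr 1
        ext y
        simp [splitSimplex, hu.1]
      · rw [indicator_of_notMem hu]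
        convert measure_empty (μ := volume)
        ext y
        simp only [splitSimplex, mem_preimage, mem_ofPred_eq, mem_empty_iff_false, iff_false,
          not_and]
        intro hu0
        rw [openSimplex_eq_empty n (sub_nonpos.2 (not_lt.1 fun h => hu ⟨hu0, h⟩))]
        simp
    simp_rw [h1]
    rw [lintegral_indicator measurableSet_Ioo, ← ofReal_integral_eq_lintegral_ofReal]
    · rw [← integral_Ioc_eq_integral_Ioo, ← intervalIntegral.integral_of_le ht.le,
        intervalIntegral.integral_comp_sub_left (fun u => u ^ n / (n.factorial : ℝ)),
        intervalIntegral.integral_div, integral_pow]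
      congr 1
      rw [Nat.factorial_succ]
      push_cast
      simp
      field_simp
    · exact ((by fun_prop : Continuous fun u : ℝ => (t - u) ^ n / (n.factorial : ℝ)).integrableOn_Icc
        (a := 0) (b := t)).mono_set Ioo_subset_Icc_self
    · filter_upwards [ae_restrict_mem measurableSet_Ioo] with u hu
      have := sub_pos.2 hu.2
      show 0 ≤ (t - u) ^ n / (n.factorial : ℝ)
      positivity

/-- The left side is the volume under the graph of `t - ∑ x i`, which is `openSimplex (n + 1) t`. -/
lemma integral_openSimplex (n : ℕ) {t : ℝ} (ht : 0 < t) :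
    ∫ x in openSimplex n t, (t - ∑ i, x i) = t ^ (n + 1) / (n + 1).factorial := by
  have h1 : ∀ y : Fin n → ℝ, volume ((fun u => (u, y)) ⁻¹' splitSimplex n t) =
      (openSimplex n t).indicator (fun y => ENNReal.ofReal (t - ∑ i, y i)) y := by
    intro y
    have hset : (fun u => (u, y)) ⁻¹' splitSimplex n t =
        {u | (∀ i, 0 < y i) ∧ u ∈ Ioo 0 (t - ∑ i, y i)} := by
      ext u
      simp only [splitSimplex, openSimplex, mem_preimage, mem_ofPred_eq, mem_Ioo]
      rw [lt_sub_comm]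
      tauto
    rw [hset]
    by_cases hy : ∀ i, 0 < y i
    · by_cases hs : ∑ i, y i < t
      · rw [indicator_of_mem (show y ∈ openSimplex n t from ⟨hy, hs⟩)]
        have hIoo : {u | (∀ i, 0 < y i) ∧ u ∈ Ioo 0 (t - ∑ i, y i)} = Ioo 0 (t - ∑ i, y i) := by
          ext u; simp [hy]
        rw [hIoo, Real.volume_Ioo, sub_zero]
      · rw [indicator_of_notMem (fun h => hs h.2)]
        have := sub_nonpos.2 (not_lt.1 hs)
        rw [Ioo_eq_empty (not_lt.2 this)]
        simp
    · rw [indicator_of_notMem (fun h => hy h.1)]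
      simp [hy]
  have h2 := volume_openSimplex (n + 1) t ht
  rw [volume_openSimplex_succ, Measure.volume_eq_prod,
    Measure.prod_apply_symm (measurableSet_splitSimplex n t)] at h2
  simp_rw [h1] at h2
  rw [lintegral_indicator (measurableSet_openSimplex n t)] at h2
  rw [integral_eq_lintegral_of_nonneg_ae, h2, ENNReal.toReal_ofReal (by positivity)]
  · filter_upwards [ae_restrict_mem (measurableSet_openSimplex n t)] with x hx
    exact sub_nonneg.2 hx.2.le
  · exact (by fun_prop : Continuous fun x : Fin n → ℝ => t - ∑ i, x i).aestronglyMeasurable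

/-- Explicit integrals for the extremal simplex example:
`∫_{P_+} φ = ∫_{P_-} (-φ) = 1/(n+1)!`, so `∫_P φ = 0` and `∫_P |φ| = 2/(n+1)!`;
moreover `μ(P) = (1/n!) ((n+1)/n)^n`. -/
theorem stmt_7 (n : ℕ) (hn : 1 ≤ n)
    (P : Set (Fin n → ℝ))
    (hP : P = {x | (∀ i, 0 < x i) ∧ ∑ i, x i < (n + 1 : ℝ) / n})
    (φ : (Fin n → ℝ) → ℝ)
    (hφdef : φ = fun x => -1 + ∑ i, x i) :
    (∫ x in {x ∈ P | 0 < φ x}, φ x) = 1 / (Nat.factorial (n + 1) : ℝ) ∧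
    (∫ x in {x ∈ P | φ x ≤ 0}, (-φ x)) = 1 / (Nat.factorial (n + 1) : ℝ) ∧
    (∫ x in P, φ x) = 0 ∧
    (∫ x in P, |φ x|) = 2 / (Nat.factorial (n + 1) : ℝ) ∧
    (volume P).toReal = (1 / (Nat.factorial n : ℝ)) * ((n + 1 : ℝ) / n) ^ n := by
  have hn0 : (0 : ℝ) < n := by exact_mod_cast hn
  set a : ℝ := (n + 1 : ℝ) / n with ha
  have ha1 : 1 < a := by rw [ha, one_lt_div hn0]; linarith
  have ha0 : 0 < a := by linarith
  change P = openSimplex n a at hP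
  have hφc : Continuous φ := by rw [hφdef]; fun_prop
  have hPm : MeasurableSet P := hP ▸ measurableSet_openSimplex n a
  have hvol : volume P = ENNReal.ofReal (a ^ n / n.factorial) := hP ▸ volume_openSimplex n a ha0
  have hvolr : (volume P).toReal = a ^ n / n.factorial := by
    rw [hvol, ENNReal.toReal_ofReal (by positivity)]
  have hfin : volume P ≠ ⊤ := by rw [hvol]; exact ENNReal.ofReal_ne_top
  have hint : IntegrableOn φ P := by
    refine IntegrableOn.of_bound hfin.lt_top hφc.aestronglyMeasurable a ?_
    filter_upwards [ae_restrict_mem hPm] with x hx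
    rw [hP] at hx
    have h0 : 0 ≤ ∑ i, x i := Finset.sum_nonneg fun i _ => (hx.1 i).le
    have h1 := hx.2
    rw [hφdef, Real.norm_eq_abs, abs_le]
    constructor <;> linarith
  have hneg : (∫ x in {x ∈ P | φ x ≤ 0}, (-φ x)) = 1 / (Nat.factorial (n + 1) : ℝ) := by
    have h := integral_openSimplex n one_pos
    rw [one_pow] at h
    rw [← h]
    have hsub : openSimplex n 1 ⊆ {x ∈ P | φ x ≤ 0} := by
      intro x hx
      rw [hP, hφdef]
      exact ⟨⟨hx.1, hx.2.trans ha1⟩, by linarith [hx.2]⟩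
    have hmeas : MeasurableSet {x ∈ P | φ x ≤ 0} :=
      hPm.inter (measurableSet_le hφc.measurable measurable_const)
    rw [setIntegral_eq_of_subset_of_forall_sdiff_eq_zero hmeas hsub]
    · congr 1
      ext x
      rw [hφdef]
      ring
    · rintro x ⟨⟨hxP, hx0⟩, hx1⟩
      rw [hP] at hxP
      have : 1 ≤ ∑ i, x i := not_lt.1 fun h => hx1 ⟨hxP.1, h⟩
      rw [hφdef] at hx0 ⊢
      dsimp only at hx0 ⊢
      linarith
  have hzero : ∫ x in P, φ x = 0 := by
    have h := integral_openSimplex n ha0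
    rw [← hP] at h
    have h1 : ∫ x in P, ((a - 1) - φ x) = (a - 1) * (a ^ n / n.factorial) - ∫ x in P, φ x := by
      have hc : IntegrableOn (fun _ : Fin n → ℝ => a - 1) P := integrableOn_const hfin
      rw [integral_sub hc hint, setIntegral_const, smul_eq_mul,
        Measure.real, hvolr, mul_comm]
    have h2 : ∫ x in P, ((a - 1) - φ x) = ∫ x in P, (a - ∑ i, x i) := by
      congr 1
      ext x
      rw [hφdef]
      ring
    have h3 : (a - 1) * (a ^ n / n.factorial) = a ^ (n + 1) / (n + 1).factorial := by
      have hf : (0 : ℝ) < n.factorial := by positivity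
      rw [Nat.factorial_succ, pow_succ]
      push_cast
      have ha2 : a - 1 = a / (n + 1) := by rw [ha]; field_simp; ring
      rw [ha2]
      field_simp
    linarith
  have hcompl : P \ {x | φ x ≤ 0} = {x ∈ P | 0 < φ x} := by
    ext x; simp
  have hm : MeasurableSet {x | φ x ≤ 0} := measurableSet_le hφc.measurable measurable_const
  have hsplit := integral_inter_add_sdiff hm hint
  have hsplitabs := integral_inter_add_sdiff hm hint.abs
  rw [hcompl] at hsplit hsplitabs
  change (∫ x in {x ∈ P | φ x ≤ 0}, φ x) + _ = _ at hsplit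
  change (∫ x in {x ∈ P | φ x ≤ 0}, |φ x|) + _ = _ at hsplitabs
  have hpos : (∫ x in {x ∈ P | 0 < φ x}, φ x) = 1 / (Nat.factorial (n + 1) : ℝ) := by
    rw [integral_neg] at hneg
    linarith
  refine ⟨hpos, hneg, hzero, ?_, ?_⟩
  · have e1 : (∫ x in {x ∈ P | φ x ≤ 0}, |φ x|) = ∫ x in {x ∈ P | φ x ≤ 0}, (-φ x) :=
      setIntegral_congr_fun (hPm.inter hm) fun x hx => abs_of_nonpos hx.2
    have e2 : (∫ x in {x ∈ P | 0 < φ x}, |φ x|) = ∫ x in {x ∈ P | 0 < φ x}, φ x :=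
      setIntegral_congr_fun (hPm.inter (measurableSet_lt measurable_const hφc.measurable))
        fun x hx => abs_of_pos hx.2
    rw [e1, e2, hneg, hpos] at hsplitabs
    rw [← hsplitabs]
    ring
  · rw [hvolr]
    ring
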